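/- arXiv:1007.2579 — 2 statements merged into one kernel-verified Lean document; each statement's English description precedes it below -/
import Mathlib

section
/- Let $R$ be a commutative ring and let $q,u,v\in R$ be invertible. Define the $2\times 2$ matrices $M_1(u)=\begin{pmatrix} uq-u^{-1}q^{-1} & 0 \\ u-u^{-1} & u^{-1}q-uq^{-1}\end{pmatrix}$ and $M_2(u)=\begin{pmatrix} u^{-1}q-uq^{-1} & u-u^{-1} \\ 0 & uq-u^{-1}q^{-1}\end{pmatrix}$ over $R$. Then the Yang–Baxter equation $M_1(u)\,M_2(uv)\,M_1(v)=M_2(v)\,M_1(uv)\,M_2(u)$ holds. -/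
/-- The unnormalized trigonometric R-matrix `u σ₁ - u⁻¹ σ₁⁻¹` in the two-dimensional
representation of the three-string Hecke algebra. -/
def M1 {R : Type*} [CommRing R] (q u : Rˣ) : Matrix (Fin 2) (Fin 2) R :=
  !![((u * q : Rˣ) : R) - ((u⁻¹ * q⁻¹ : Rˣ) : R), 0;
     (u : R) - ((u⁻¹ : Rˣ) : R), ((u⁻¹ * q : Rˣ) : R) - ((u * q⁻¹ : Rˣ) : R)]

/-- The unnormalized trigonometric R-matrix `u σ₂ - u⁻¹ σ₂⁻¹` in the two-dimensional
representation of the three-string Hecke algebra. -/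
def M2 {R : Type*} [CommRing R] (q u : Rˣ) : Matrix (Fin 2) (Fin 2) R :=
  !![((u⁻¹ * q : Rˣ) : R) - ((u * q⁻¹ : Rˣ) : R), (u : R) - ((u⁻¹ : Rˣ) : R);
     0, ((u * q : Rˣ) : R) - ((u⁻¹ * q⁻¹ : Rˣ) : R)]

/-!
If `s` and `t` satisfy the braid relation, then `s t` conjugates `s` into `t`, so a Hecke relation
`s - s⁻¹ = z` passes to `t`. It makes `u s - u⁻¹ s⁻¹` an affine function of `s`. When both sides of
the Yang–Baxter equation are expanded, the cubic terms agree by the braid relation, and comparing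
the coefficients of `s` and of `t` leaves a single scalar identity.
-/

section Semiring

variable {R A : Type*} [CommSemiring R] [Semiring A] [Algebra R A]

theorem affine_mul_affine_mul_affine {s : A} (t : A) {z w : R}
    (hs : s * s = z • s + w • 1) (a a' b b' c c' : R) :
    (a • s + a' • 1) * (c • t + c' • 1) * (b • s + b' • 1) =
      (a * b * c) • (s * t * s) + (a * b' * c) • (s * t) + (a' * b * c) • (t * s) +
        (c' * (a * b' + a' * b + a * b * z)) • s + (a' * b' * c) • t +
        (a' * b' * c' + a * b * c' * w) • 1 := by
  have expand : (a • s + a' • 1) * (c • t + c' • 1) * (b • s + b' • 1) =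
      (a * b * c) • (s * t * s) + (a * b' * c) • (s * t) + (a' * b * c) • (t * s) +
        (a * b * c') • (s * s) + (c' * (a * b' + a' * b)) • s + (a' * b' * c) • t +
        (a' * b' * c') • (1 : A) := by
    simp only [add_mul, mul_add, smul_mul_assoc, mul_smul_comm, mul_one, one_mul]
    module
  rw [expand, hs]
  module

theorem affine_yang_baxter {s t : A} {z w a a' b b' c c' : R}
    (hs : s * s = z • s + w • 1) (ht : t * t = z • t + w • 1) (braid : s * t * s = t * s * t)
    (hcoeff : c' * (a * b' + a' * b + a * b * z) = a' * b' * c) :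
    (a • s + a' • 1) * (c • t + c' • 1) * (b • s + b' • 1) =
      (b • t + b' • 1) * (c • s + c' • 1) * (a • t + a' • 1) := by
  have hcoeff_swap : c' * (b * a' + b' * a + b * a * z) = b' * a' * c := by
    rw [mul_comm b' a', ← hcoeff]
    ring
  rw [affine_mul_affine_mul_affine t hs, affine_mul_affine_mul_affine s ht, hcoeff, hcoeff_swap,
    braid]
  module

end Semiring

section Hecke

variable {R A : Type*} [CommRing R] [Ring A] [Algebra R A]

/-- The Baxterization `u s - u⁻¹ s⁻¹` of an invertible element `s` of an `R`-algebra, with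
spectral parameter `u`. It turns generators of a Hecke algebra into solutions of the Yang–Baxter
equation with multiplicative spectral parameter. -/
def baxterize (u : Rˣ) (s : Aˣ) : A :=
  (u : R) • (s : A) - (↑u⁻¹ : R) • (↑s⁻¹ : A)

theorem mul_self_of_sub_inv_eq_smul_one {s : Aˣ} {z : R} (hs : (s : A) - ↑s⁻¹ = z • 1) :
    (s * s : A) = z • (s : A) + (1 : R) • 1 := by
  calc (s * s : A) = (s - ↑s⁻¹) * s + ↑s⁻¹ * s := by rw [sub_mul, sub_add_cancel]
    _ = z • (s : A) + (1 : R) • 1 := by rw [hs, smul_one_mul, Units.inv_mul, one_smul]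

theorem baxterize_eq_affine {s : Aˣ} {z : R} (hs : (s : A) - ↑s⁻¹ = z • 1) (u : Rˣ) :
    baxterize u s = ((u : R) - ↑u⁻¹) • (s : A) + (↑u⁻¹ * z) • 1 := by
  rw [baxterize, mul_smul, ← hs]
  module

theorem sub_inv_eq_smul_one_of_braid {s t : Aˣ} {z : R} (braid : s * t * s = t * s * t)
    (hs : (s : A) - ↑s⁻¹ = z • 1) : (t : A) - ↑t⁻¹ = z • 1 := by
  have conj : SemiconjBy (s * t) s t := by rw [SemiconjBy, braid, mul_assoc]
  have conj_sub_inv : SemiconjBy ((s * t : Aˣ) : A) (s - ↑s⁻¹) (t - ↑t⁻¹) :=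
    conj.units_val.sub_right conj.inv_right.units_val
  apply (s * t).isUnit.mul_right_cancel
  rw [← conj_sub_inv.eq, hs, mul_smul_one, smul_one_mul]

theorem yang_baxter_M_general {s t : Aˣ} {z : R} (braid : s * t * s = t * s * t)
    (hs : (s : A) - ↑s⁻¹ = z • 1) (u v : Rˣ) :
    baxterize u s * baxterize (u * v) t * baxterize v s =
      baxterize v t * baxterize (u * v) s * baxterize u t := by
  have ht := sub_inv_eq_smul_one_of_braid braid hs
  simp only [baxterize_eq_affine hs, baxterize_eq_affine ht]
  refine affine_yang_baxter (mul_self_of_sub_inv_eq_smul_one hs)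
    (mul_self_of_sub_inv_eq_smul_one ht) (by exact_mod_cast braid) ?_
  simp only [mul_inv, Units.val_mul]
  ring

end Hecke

section Representation

variable {R : Type*} [CommRing R]

/-- The image of the generator `σ₁` in the two-dimensional representation of the three-string
Hecke algebra, as a unit; its inverse is read off the Hecke relation
`σ₁ - σ₁⁻¹ = q - q⁻¹`. -/
def heckeGen₁ (q : Rˣ) : (Matrix (Fin 2) (Fin 2) R)ˣ where
  val := !![(q : R), 0; 1, -↑q⁻¹]
  inv := !![(↑q⁻¹ : R), 0; 1, -↑q]
  val_inv := by simp [Matrix.one_fin_two]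
  inv_val := by simp [Matrix.one_fin_two]

/-- The image of the generator `σ₂` in the two-dimensional representation of the three-string
Hecke algebra, as a unit; its inverse is read off the Hecke relation
`σ₂ - σ₂⁻¹ = q - q⁻¹`. -/
def heckeGen₂ (q : Rˣ) : (Matrix (Fin 2) (Fin 2) R)ˣ where
  val := !![-↑q⁻¹, 1; 0, (q : R)]
  inv := !![-↑q, 1; 0, (↑q⁻¹ : R)]
  val_inv := by simp [Matrix.one_fin_two]
  inv_val := by simp [Matrix.one_fin_two]

theorem heckeGen_braid (q : Rˣ) :
    heckeGen₁ q * heckeGen₂ q * heckeGen₁ q = heckeGen₂ q * heckeGen₁ q * heckeGen₂ q := by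
  ext : 1
  simp [heckeGen₁, heckeGen₂]

theorem heckeGen₁_sub_inv (q : Rˣ) :
    (heckeGen₁ q : Matrix (Fin 2) (Fin 2) R) - ↑(heckeGen₁ q)⁻¹ = ((q : R) - ↑q⁻¹) • 1 := by
  ext i j
  fin_cases i <;> fin_cases j <;> simp [heckeGen₁, neg_add_eq_sub]

theorem M1_eq_baxterize (q u : Rˣ) : M1 q u = baxterize u (heckeGen₁ q) := by
  simp [M1, baxterize, heckeGen₁, neg_add_eq_sub]

theorem M2_eq_baxterize (q u : Rˣ) : M2 q u = baxterize u (heckeGen₂ q) := by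
  simp [M2, baxterize, heckeGen₂, neg_add_eq_sub]

end Representation

theorem yang_baxter_M (R : Type*) [CommRing R] (q u v : Rˣ) :
    M1 q u * M2 q (u * v) * M1 q v = M2 q v * M1 q (u * v) * M2 q u := by
  simp only [M1_eq_baxterize, M2_eq_baxterize]
  exact yang_baxter_M_general (heckeGen_braid q) (heckeGen₁_sub_inv q) u v
end

section
/- Let $R$ be a commutative ring and let $q,u,v\in R$ be invertible. Define the $2\times 2$ matrices $S_1(u)=\begin{pmatrix} u^{-1}q-uq^{-1} & 0 \\ u^{-1}-u & uq-u^{-1}q^{-1}\end{pmatrix}$ and $S_2(u)=\begin{pmatrix} uq-u^{-1}q^{-1} & u^{-1}-u \\ 0 & u^{-1}q-uq^{-1}\end{pmatrix}$ over $R$. Then the Yang–Baxter equation $S_1(u)\,S_2(uv)\,S_1(v)=S_2(v)\,S_1(uv)\,S_2(u)$ holds. -/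
/-- The unnormalized trigonometric R-matrix `u⁻¹ σ₁ - u σ₁⁻¹` in the two-dimensional
representation of the three-string Hecke algebra. -/
def S1 {R : Type*} [CommRing R] (q u : Rˣ) : Matrix (Fin 2) (Fin 2) R :=
  !![((u⁻¹ * q : Rˣ) : R) - ((u * q⁻¹ : Rˣ) : R), 0;
     ((u⁻¹ : Rˣ) : R) - (u : R), ((u * q : Rˣ) : R) - ((u⁻¹ * q⁻¹ : Rˣ) : R)]

/-- The unnormalized trigonometric R-matrix `u⁻¹ σ₂ - u σ₂⁻¹` in the two-dimensional
representation of the three-string Hecke algebra. -/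
def S2 {R : Type*} [CommRing R] (q u : Rˣ) : Matrix (Fin 2) (Fin 2) R :=
  !![((u * q : Rˣ) : R) - ((u⁻¹ * q⁻¹ : Rˣ) : R), ((u⁻¹ : Rˣ) : R) - (u : R);
     0, ((u⁻¹ * q : Rˣ) : R) - ((u * q⁻¹ : Rˣ) : R)]

/-!
If `σ` and `τ` satisfy the braid relation and the Hecke relation `σ - σ⁻¹ = z`, then
`u⁻¹ σ - u σ⁻¹ = (u⁻¹ - u) σ + u z` is affine in `σ`. In the difference of the two sides of the
Yang–Baxter equation the cubic terms cancel by the braid relation and the terms in `σ τ` and `τ σ`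
cancel identically; reducing `σ²` and `τ²` by the quadratic relation leaves a scalar multiple of
`σ - τ`, and that scalar vanishes.
-/

section Hecke

variable {R A : Type*} [CommRing R] [Ring A] [Algebra R A]

theorem yang_baxter_affine_of_braid {s t e : A} {z x y w a b c : R}
    (braid : s * t * s = t * s * t)
    (hs : s * s = z • s + e) (ht : t * t = z • t + e)
    (hcoeff : x * b * w * z + x * b * c + a * b * w = a * y * c) :
    (x • s + a • 1) * (y • t + b • 1) * (w • s + c • 1) =
      (w • t + c • 1) * (y • s + b • 1) * (x • t + a • 1) := by
  simp only [mul_add, add_mul, smul_mul_assoc, mul_smul_comm, mul_one, one_mul]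
  linear_combination (norm := module)
    (x * y * w) • braid + (x * b * w) • hs - (x * b * w) • ht + hcoeff • s - hcoeff • t

/-- The Baxterization `u⁻¹ σ - u σ⁻¹` of an invertible element `σ`, which assigns to a braid
generator a candidate solution of the Yang–Baxter equation with spectral parameter `u`. -/
def baxterization (σ : Aˣ) (u : Rˣ) : A :=
  ((u⁻¹ : Rˣ) : R) • (σ : A) - (u : R) • ((σ⁻¹ : Aˣ) : A)

theorem mul_self_of_sub_inv_eq {σ : Aˣ} {z : R} (hσ : (σ : A) - ((σ⁻¹ : Aˣ) : A) = z • 1) :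
    (σ : A) * σ = z • (σ : A) + 1 := by
  calc (σ : A) * σ = ((σ : A) - ((σ⁻¹ : Aˣ) : A)) * σ + 1 := by
        rw [sub_mul, Units.inv_mul, sub_add_cancel]
    _ = z • (σ : A) + 1 := by rw [hσ, smul_one_mul]

theorem baxterization_eq_of_sub_inv_eq {σ : Aˣ} {z : R}
    (hσ : (σ : A) - ((σ⁻¹ : Aˣ) : A) = z • 1) (u : Rˣ) :
    baxterization σ u = (((u⁻¹ : Rˣ) : R) - u) • (σ : A) + (u * z) • 1 := by
  unfold baxterization
  linear_combination (norm := module) (u : R) • hσ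

theorem yang_baxter_S_general {σ τ : Aˣ} {z : R} (braid : σ * τ * σ = τ * σ * τ)
    (hσ : (σ : A) - ((σ⁻¹ : Aˣ) : A) = z • 1) (hτ : (τ : A) - ((τ⁻¹ : Aˣ) : A) = z • 1)
    (u v : Rˣ) :
    baxterization σ u * baxterization τ (u * v) * baxterization σ v =
      baxterization τ v * baxterization σ (u * v) * baxterization τ u := by
  simp only [baxterization_eq_of_sub_inv_eq hσ, baxterization_eq_of_sub_inv_eq hτ]
  refine yang_baxter_affine_of_braid (congrArg Units.val braid)
    (mul_self_of_sub_inv_eq hσ) (mul_self_of_sub_inv_eq hτ) ?_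
  simp only [mul_inv, Units.val_mul]
  ring

end Hecke

section Representation

variable {R : Type*} [CommRing R]

/-- The generator `σ₁` of the three-string Hecke algebra in its two-dimensional representation,
bundled with its inverse. -/
def heckeSigma1 (q : Rˣ) : (Matrix (Fin 2) (Fin 2) R)ˣ where
  val := !![(q : R), 0; 1, -((q⁻¹ : Rˣ) : R)]
  inv := !![((q⁻¹ : Rˣ) : R), 0; 1, -(q : R)]
  val_inv := by simp [Matrix.one_fin_two]
  inv_val := by simp [Matrix.one_fin_two]

/-- The generator `σ₂` of the three-string Hecke algebra in its two-dimensional representation,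
bundled with its inverse. -/
def heckeSigma2 (q : Rˣ) : (Matrix (Fin 2) (Fin 2) R)ˣ where
  val := !![-((q⁻¹ : Rˣ) : R), 1; 0, (q : R)]
  inv := !![-(q : R), 1; 0, ((q⁻¹ : Rˣ) : R)]
  val_inv := by simp [Matrix.one_fin_two]
  inv_val := by simp [Matrix.one_fin_two]

theorem heckeSigma_braid (q : Rˣ) :
    heckeSigma1 q * heckeSigma2 q * heckeSigma1 q =
      heckeSigma2 q * heckeSigma1 q * heckeSigma2 q := by
  ext i j
  fin_cases i <;> fin_cases j <;> simp [heckeSigma1, heckeSigma2]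

theorem heckeSigma1_sub_inv (q : Rˣ) :
    (heckeSigma1 q : Matrix (Fin 2) (Fin 2) R) - ↑(heckeSigma1 q)⁻¹ =
      ((q : R) - ((q⁻¹ : Rˣ) : R)) • 1 := by
  ext i j
  fin_cases i <;> fin_cases j <;> simp [heckeSigma1, neg_add_eq_sub]

theorem heckeSigma2_sub_inv (q : Rˣ) :
    (heckeSigma2 q : Matrix (Fin 2) (Fin 2) R) - ↑(heckeSigma2 q)⁻¹ =
      ((q : R) - ((q⁻¹ : Rˣ) : R)) • 1 := by
  ext i j
  fin_cases i <;> fin_cases j <;> simp [heckeSigma2, neg_add_eq_sub]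

theorem S1_eq_baxterization (q u : Rˣ) : S1 q u = baxterization (heckeSigma1 q) u := by
  simp [S1, baxterization, heckeSigma1, neg_add_eq_sub]

theorem S2_eq_baxterization (q u : Rˣ) : S2 q u = baxterization (heckeSigma2 q) u := by
  simp [S2, baxterization, heckeSigma2, neg_add_eq_sub]

end Representation

theorem yang_baxter_S (R : Type*) [CommRing R] (q u v : Rˣ) :
    S1 q u * S2 q (u * v) * S1 q v = S2 q v * S1 q (u * v) * S2 q u := by
  simp only [S1_eq_baxterization, S2_eq_baxterization]
  exact yang_baxter_S_general (heckeSigma_braid q) (heckeSigma1_sub_inv q)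
    (heckeSigma2_sub_inv q) u v
end
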